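/- arXiv:2412.15820 — 4 statements merged into one kernel-verified Lean document; each statement's English description precedes it below -/
import Mathlib

section
/- Let (Ω, 𝔽, P) be a probability space and Z : Ω → ℝ a random variable. Let N > 0, C > 0 and κ > 0 be real constants with C·κ·e^{C·κ} ≤ 1/2. Assume that for every α ∈ (0, κ], the random variable exp(α·N·Z) is integrable and E[exp(α·N·Z)] ≤ exp(C·e^{C·α}·(α²·N + α)). Then for every u > 0, P(Z ≥ u) ≤ e^{1/2} · exp(− N·κ·u² / (2·(1+u))). -/
/-! Markov's inequality for `exp (α N Z)` bounds the tail by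
`exp (-α N u + C e^{Cα} (α² N + α))`. Take `α = κ s` with `s = u / (1 + u) ≤ min 1 u`.
Since `α ≤ κ`, the hypothesis on `C κ` gives `C e^{Cα} ≤ 1 / (2κ)`, so the exponent is at most
`-κ N s u + κ N s² / 2 + s / 2 ≤ -κ N s u / 2 + 1 / 2`. -/

open MeasureTheory ProbabilityTheory
open scoped ProbabilityTheory

/-- One-sided Chernoff concentration bound (Corollary 2.3 of the paper, one-sided
version): if the exponential moments of `N·Z` satisfy the bound of Theorem 2.2
for all `α ∈ (0, κ]`, with `C·κ·e^{C·κ} ≤ 1/2`, then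
`P(Z ≥ u) ≤ e^{1/2} · exp(− N·κ·u² / (2·(1+u)))` for every `u > 0`. -/
theorem one_sided_chernoff_bound
    {Ω : Type*} [MeasureSpace Ω] [IsProbabilityMeasure (ℙ : Measure Ω)]
    (Z : Ω → ℝ) (N C κ : ℝ) (hN : 0 < N) (hC : 0 < C) (hκ : 0 < κ)
    (hCκ : C * κ * Real.exp (C * κ) ≤ 1 / 2)
    (hint : ∀ α : ℝ, 0 < α → α ≤ κ →
      Integrable (fun ω => Real.exp (α * N * Z ω)))
    (hmom : ∀ α : ℝ, 0 < α → α ≤ κ →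
      (∫ ω, Real.exp (α * N * Z ω)) ≤
        Real.exp (C * Real.exp (C * α) * (α ^ 2 * N + α)))
    (u : ℝ) (hu : 0 < u) :
    (ℙ {ω | Z ω ≥ u}).toReal ≤
      Real.exp (1 / 2) * Real.exp (- (N * κ * u ^ 2) / (2 * (1 + u))) := by
  -- With `s = u / (1 + u)`, the Chernoff parameter is `α = κ * s`.
  obtain ⟨s, hs⟩ : ∃ s, s = u / (1 + u) := ⟨_, rfl⟩
  have hs0 : 0 < s := by rw [hs]; positivity
  have hs1 : s ≤ 1 := by rw [hs, div_le_one (by linarith)]; linarith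
  have hsu : s ≤ u := by rw [hs]; exact div_le_self hu.le (by linarith)
  have hα0 : 0 < κ * s := mul_pos hκ hs0
  have hακ : κ * s ≤ κ := mul_le_of_le_one_right hκ.le hs1
  have hB : κ * (C * Real.exp (C * (κ * s))) ≤ 1 / 2 := by
    refine le_trans ?_ hCκ
    rw [← mul_assoc, mul_comm κ C]
    gcongr
  have hmarkov := measure_ge_le_exp_mul_mgf (μ := (ℙ : Measure Ω)) (X := Z) u
    (mul_pos hα0 hN).le (hint _ hα0 hακ)
  refine hmarkov.trans ?_
  calc Real.exp (-(κ * s * N) * u) * mgf Z ℙ (κ * s * N)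
      ≤ Real.exp (-(κ * s * N) * u) *
          Real.exp (C * Real.exp (C * (κ * s)) * ((κ * s) ^ 2 * N + κ * s)) := by
        gcongr
        exact hmom _ hα0 hακ
    _ ≤ Real.exp (1 / 2) * Real.exp (-(N * κ * u ^ 2) / (2 * (1 + u))) := by
        rw [← Real.exp_add, ← Real.exp_add, Real.exp_le_exp]
        have htarget : -(N * κ * u ^ 2) / (2 * (1 + u)) = -(N * κ * (s * u)) / 2 := by
          rw [hs]
          field_simp
        rw [htarget]
        have hpos : 0 ≤ κ * s ^ 2 * N + s := by positivity
        have hmul := mul_le_mul_of_nonneg_right hB hpos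
        -- The quadratic term absorbs half of the linear gain, since `s ≤ u`.
        have hquad : N * κ * (s * s) ≤ N * κ * (s * u) := by gcongr
        linarith
end

section
/- In the setting below, with D := ν(g)/η(q) − (η(g)/η(q)²)·ν(q), the second-order discrete derivative of the normalized ratio Φ satisfies the bound | 2N·( N·(Φ(η̃) − Φ(η)) − D ) | ≤ (2 / η₀(q)²) · ( |ν(g)·ν(q)| + |Φ(η)|·ν(q)² ). -/
/-!
Write `G = η(g)`, `Q = η(q)`, `a = ν(g)`, `b = ν(q)`. Since `η̃ = η + ν / N`, the ratio at `η̃` is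
`(G + a / N) / Q'` with `Q' = Q + b / N`, and subtracting the first-order term leaves the exact
remainder `2N (N (Φ(η̃) - Φ(η)) - D) = -2 (a b - Φ(η) b²) / (Q Q')`. The bound follows from
the triangle inequality and `Q, Q' ≥ η₀(q) > 0`. So the statement reduces to `ratio_bound`, about
real numbers, once the integrals are computed by `integral_add_inv_smul_dirac`.
-/

open MeasureTheory
open scoped ENNReal

lemma integral_add_inv_smul_dirac {E : Type*} [MeasurableSpace E] {f : E → ℝ}
    (hf : Measurable f) {μ : Measure E} (hfi : Integrable f μ) {N : ℕ} (hN : 1 ≤ N) (x : E) :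
    ∫ y, f y ∂(μ + (N : ℝ≥0∞)⁻¹ • Measure.dirac x) = (∫ y, f y ∂μ) + f x / N := by
  have hN' : (N : ℝ≥0∞)⁻¹ ≠ ∞ := by
    simp only [ne_eq, ENNReal.inv_eq_top, Nat.cast_eq_zero]
    omega
  have hd : Integrable f (Measure.dirac x) :=
    integrable_dirac' hf.stronglyMeasurable (by simp)
  rw [integral_add_measure hfi (hd.smul_measure hN'), integral_smul_measure,
    integral_dirac' _ _ hf.stronglyMeasurable]
  simp [div_eq_inv_mul]

/-- The remainder of the first-order expansion of a quotient `G / Q` moved by `(a, b) / N`, with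
both denominators at least `Q₀`. -/
lemma ratio_bound {N Q₀ Q Q' G a b : ℝ} (hN : 0 < N) (hQ₀ : 0 < Q₀) (hQ : Q₀ ≤ Q)
    (hQ' : Q₀ ≤ Q') (h : Q' = Q + b / N) :
    |2 * N * (N * ((G + a / N) / Q' - G / Q) - (a / Q - G / Q ^ 2 * b))| ≤
      2 / Q₀ ^ 2 * (|a * b| + |G / Q| * b ^ 2) := by
  have hQp : 0 < Q := hQ₀.trans_le hQ
  have hQp' : 0 < Q' := hQ₀.trans_le hQ'
  have key : 2 * N * (N * ((G + a / N) / Q' - G / Q) - (a / Q - G / Q ^ 2 * b)) =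
      2 / (Q * Q') * (G / Q * b ^ 2 - a * b) := by
    have hb : b = N * (Q' - Q) := by rw [h]; field_simp; ring
    rw [hb]
    field_simp
    ring
  rw [key, abs_mul, abs_of_pos (by positivity : 0 < 2 / (Q * Q'))]
  have h1 : 2 / (Q * Q') ≤ 2 / Q₀ ^ 2 := by
    rw [sq]
    gcongr
  have h2 : |G / Q * b ^ 2 - a * b| ≤ |a * b| + |G / Q| * b ^ 2 := by
    have := abs_sub (G / Q * b ^ 2) (a * b)
    rw [abs_mul (G / Q), abs_of_nonneg (sq_nonneg b)] at this
    linarith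
  exact mul_le_mul h1 h2 (abs_nonneg _) (by positivity)

/-- First estimate of Lemma 4.6 of the paper (case k = 1): the second-order
discrete derivative of the normalized ratio `Φ(μ) = μ(g)/μ(q)` in the
direction `ν = δ_{x'} − δ_x` satisfies
`|2N·(N·(Φ(η̃) − Φ(η)) − D)| ≤ (2/η₀(q)²)·(|ν(g)·ν(q)| + |Φ(η)|·ν(q)²)`. -/
theorem second_discrete_derivative_normalized_ratio_bound
    {E : Type*} [MeasurableSpace E]
    (g q : E → ℝ) (hg : Measurable g) (hq : Measurable q)
    (Bg Bq : ℝ) (hgb : ∀ y, |g y| ≤ Bg) (hqb : ∀ y, |q y| ≤ Bq)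
    (δ : ℝ) (hδ : 0 < δ) (hqδ : ∀ y, δ ≤ q y)
    (N : ℕ) (hN : 1 ≤ N) (x x' : E)
    (η₀ : Measure E) [IsFiniteMeasure η₀] (hη₀ : η₀ ≠ 0)
    (η ηt : Measure E)
    (hη : η = η₀ + (N : ℝ≥0∞)⁻¹ • Measure.dirac x)
    (hηt : ηt = η₀ + (N : ℝ≥0∞)⁻¹ • Measure.dirac x')
    (D : ℝ)
    (hD : D = (g x' - g x) / (∫ y, q y ∂η) -
      ((∫ y, g y ∂η) / (∫ y, q y ∂η) ^ 2) * (q x' - q x)) :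
    |2 * (N : ℝ) * ((N : ℝ) * ((∫ y, g y ∂ηt) / (∫ y, q y ∂ηt) -
        (∫ y, g y ∂η) / (∫ y, q y ∂η)) - D)| ≤
      (2 / (∫ y, q y ∂η₀) ^ 2) *
        (|(g x' - g x) * (q x' - q x)| +
          |(∫ y, g y ∂η) / (∫ y, q y ∂η)| * (q x' - q x) ^ 2) := by
  have int_of_bdd : ∀ f : E → ℝ, Measurable f → (∃ B, ∀ y, |f y| ≤ B) → Integrable f η₀ :=
    fun f hf ⟨B, hB⟩ =>
      Integrable.of_bound hf.aestronglyMeasurable B (Filter.Eventually.of_forall hB)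
  have hgi := int_of_bdd g hg ⟨Bg, hgb⟩
  have hqi := int_of_bdd q hq ⟨Bq, hqb⟩
  have hq0 : 0 < ∫ y, q y ∂η₀ := by
    have hc : ∫ _, δ ∂η₀ ≤ ∫ y, q y ∂η₀ := integral_mono (integrable_const _) hqi hqδ
    have hm : 0 < η₀.real Set.univ := by
      have : NeZero η₀ := ⟨hη₀⟩
      exact measureReal_univ_pos
    rw [integral_const, smul_eq_mul] at hc
    exact lt_of_lt_of_le (mul_pos hm hδ) hc
  have hNpos : 0 < (N : ℝ) := by positivity
  have hx : 0 ≤ q x / N := div_nonneg (hδ.le.trans (hqδ x)) hNpos.le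
  have hx' : 0 ≤ q x' / N := div_nonneg (hδ.le.trans (hqδ x')) hNpos.le
  have hgx := integral_add_inv_smul_dirac hg hgi hN x
  have hqx := integral_add_inv_smul_dirac hq hqi hN x
  have hgx' := integral_add_inv_smul_dirac hg hgi hN x'
  have hqx' := integral_add_inv_smul_dirac hq hqi hN x'
  rw [← hη] at hgx hqx
  rw [← hηt] at hgx' hqx'
  have hgt : ∫ y, g y ∂ηt = (∫ y, g y ∂η) + (g x' - g x) / N := by rw [hgx, hgx']; ring
  have hqt : ∫ y, q y ∂ηt = (∫ y, q y ∂η) + (q x' - q x) / N := by rw [hqx, hqx']; ring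
  rw [hD, hgt]
  exact ratio_bound hNpos hq0 (by linarith) (by linarith) hqt
end

section
/- In the setting below, with D := ν(g)/η(q) − (η(g)/η(q)²)·ν(q) and D₂ := 2·Φ(η)·D, the second-order discrete derivative of the squared normalized ratio Φ² satisfies | 2N·( N·(Φ(η̃)² − Φ(η)²) − D₂ ) | ≤ (1 / η₀(q)²) · ( 6·ν(g)² + 10·Φ(η)²·ν(q)² ). -/
/-!
Write `A = η(q)`, `b = η̃(q)`, `F = Φ(η)`, `h = ν(g)`, `k = ν(q)` and `w = h - F k`.
Since `η̃ = η + ν / N`, one has `Φ(η̃) - F = w / (N b)` and `D = w / A`. Factoring the difference of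
squares and using `1/b - 1/A = -k / (N A b)`, the quantity to be bounded is exactly
`2 (w / b)² - 4 F k w / (A b)`. Both `A` and `b` are at least `c = η₀(q) > 0`, so it is at most
`(2 w² + 4 |F k| |w|) / c²` in absolute value, and `w = h - F k` with `8 |h F k| ≤ 4 h² + 4 (F k)²`
gives `(6 h² + 10 (F k)²) / c²`.
-/

open MeasureTheory
open scoped ENNReal

/-- The exact formula for the second-order discrete derivative of a squared ratio. Here `A = a + m/n`
and `b = a + m'/n` are the two denominators, `G = e + p/n` and `e + p'/n` the two numerators. -/
lemma second_difference_sq_ratio {e a p p' m m' n A b G : ℝ} (hn : n ≠ 0)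
    (hA : A = a + n⁻¹ * m) (hb : b = a + n⁻¹ * m') (hG : G = e + n⁻¹ * p)
    (hA0 : A ≠ 0) (hb0 : b ≠ 0) :
    2 * n * (n * (((e + n⁻¹ * p') / b) ^ 2 - (G / A) ^ 2)
        - 2 * (G / A) * ((p' - p) / A - G / A ^ 2 * (m' - m)))
      = 2 * (((p' - p) - G / A * (m' - m)) / b) ^ 2
        - 4 * (G / A * (m' - m)) * ((p' - p) - G / A * (m' - m)) / (A * b) := by
  have h1 : e + n⁻¹ * p' = G + n⁻¹ * (p' - p) := by rw [hG]; ring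
  have h2 : m' - m = n * (b - A) := by rw [hA, hb]; field_simp; ring
  rw [h1, h2]
  field_simp
  ring

lemma abs_second_difference_le {c A b h u : ℝ} (hc : 0 < c) (hA : c ≤ A) (hb : c ≤ b) :
    |2 * ((h - u) / b) ^ 2 - 4 * u * (h - u) / (A * b)| ≤
      1 / c ^ 2 * (6 * h ^ 2 + 10 * u ^ 2) := by
  have hA0 : 0 < A := hc.trans_le hA
  have hb0 : 0 < b := hc.trans_le hb
  have e1 : |2 * ((h - u) / b) ^ 2| ≤ 2 * (h - u) ^ 2 / c ^ 2 := by
    rw [abs_of_nonneg (by positivity), div_pow, mul_div_assoc]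
    gcongr
  have e2 : |4 * u * (h - u) / (A * b)| ≤ 4 * |u * (h - u)| / c ^ 2 := by
    rw [abs_div, abs_of_pos (mul_pos hA0 hb0), mul_assoc, abs_mul, abs_of_pos (four_pos (α := ℝ)), sq]
    gcongr
  have e3 : 2 * (h - u) ^ 2 + 4 * |u * (h - u)| ≤ 6 * h ^ 2 + 10 * u ^ 2 := by
    rcases abs_cases (u * (h - u)) with ⟨h1, -⟩ | ⟨h1, -⟩ <;> rw [h1] <;>
      nlinarith [sq_nonneg (h - u), sq_nonneg (h + u), sq_nonneg h, sq_nonneg u]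
  calc _ ≤ _ := abs_sub _ _
    _ ≤ _ := add_le_add e1 e2
    _ = 1 / c ^ 2 * (2 * (h - u) ^ 2 + 4 * |u * (h - u)|) := by ring
    _ ≤ _ := by gcongr

lemma integral_add_smul_dirac {E : Type*} [MeasurableSpace E] {f : E → ℝ} (hf : Measurable f)
    {N : ℕ} (hN : 1 ≤ N) (x : E) {μ : Measure E} (hi : Integrable f μ) :
    ∫ y, f y ∂(μ + (N : ℝ≥0∞)⁻¹ • Measure.dirac x) = ∫ y, f y ∂μ + (N : ℝ)⁻¹ * f x := by
  have hd : Integrable f (Measure.dirac x) :=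
    integrable_dirac' hf.stronglyMeasurable (by simp)
  have hN0 : (N : ℝ≥0∞)⁻¹ ≠ ∞ := by
    rw [ne_eq, ENNReal.inv_eq_top]
    exact_mod_cast (by lia : N ≠ 0)
  rw [integral_add_measure hi (hd.smul_measure hN0), integral_smul_measure,
    integral_dirac' f x hf.stronglyMeasurable]
  simp

/-- Second estimate of Lemma 4.6 of the paper (case k = 2): the second-order
discrete derivative of the squared normalized ratio `Φ²` satisfies
`|2N·(N·(Φ(η̃)² − Φ(η)²) − 2·Φ(η)·D)| ≤ (1/η₀(q)²)·(6·ν(g)² + 10·Φ(η)²·ν(q)²)`. -/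
theorem second_discrete_derivative_squared_ratio_bound
    {E : Type*} [MeasurableSpace E]
    (g q : E → ℝ) (hg : Measurable g) (hq : Measurable q)
    (Bg Bq : ℝ) (hgb : ∀ y, |g y| ≤ Bg) (hqb : ∀ y, |q y| ≤ Bq)
    (δ : ℝ) (hδ : 0 < δ) (hqδ : ∀ y, δ ≤ q y)
    (N : ℕ) (hN : 1 ≤ N) (x x' : E)
    (η₀ : Measure E) [IsFiniteMeasure η₀] (hη₀ : η₀ ≠ 0)
    (η ηt : Measure E)
    (hη : η = η₀ + (N : ℝ≥0∞)⁻¹ • Measure.dirac x)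
    (hηt : ηt = η₀ + (N : ℝ≥0∞)⁻¹ • Measure.dirac x')
    (D D₂ : ℝ)
    (hD : D = (g x' - g x) / (∫ y, q y ∂η) -
      ((∫ y, g y ∂η) / (∫ y, q y ∂η) ^ 2) * (q x' - q x))
    (hD₂ : D₂ = 2 * ((∫ y, g y ∂η) / (∫ y, q y ∂η)) * D) :
    |2 * (N : ℝ) * ((N : ℝ) * (((∫ y, g y ∂ηt) / (∫ y, q y ∂ηt)) ^ 2 -
        ((∫ y, g y ∂η) / (∫ y, q y ∂η)) ^ 2) - D₂)| ≤
      (1 / (∫ y, q y ∂η₀) ^ 2) *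
        (6 * (g x' - g x) ^ 2 +
          10 * ((∫ y, g y ∂η) / (∫ y, q y ∂η)) ^ 2 * (q x' - q x) ^ 2) := by
  have hbdd : ∀ {f : E → ℝ} {B : ℝ}, Measurable f → (∀ y, |f y| ≤ B) → Integrable f η₀ :=
    fun hf hB => Integrable.of_bound hf.aestronglyMeasurable _ (ae_of_all _ hB)
  have hgi := hbdd hg hgb
  have hqi := hbdd hq hqb
  have hc : 0 < ∫ y, q y ∂η₀ := by
    have hmass : 0 < η₀.real Set.univ := by
      rw [measureReal_def, ENNReal.toReal_pos_iff]
      exact ⟨Measure.measure_univ_pos.2 hη₀, measure_lt_top _ _⟩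
    calc 0 < η₀.real Set.univ * δ := mul_pos hmass hδ
      _ = ∫ _, δ ∂η₀ := by simp
      _ ≤ _ := integral_mono (integrable_const _) hqi hqδ
  have hn : (0 : ℝ) < N := by exact_mod_cast hN
  have hA : ∫ y, q y ∂η = ∫ y, q y ∂η₀ + (N : ℝ)⁻¹ * q x := by
    rw [hη, integral_add_smul_dirac hq hN x hqi]
  have hb : ∫ y, q y ∂ηt = ∫ y, q y ∂η₀ + (N : ℝ)⁻¹ * q x' := by
    rw [hηt, integral_add_smul_dirac hq hN x' hqi]
  have hG : ∫ y, g y ∂η = ∫ y, g y ∂η₀ + (N : ℝ)⁻¹ * g x := by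
    rw [hη, integral_add_smul_dirac hg hN x hgi]
  have hGt : ∫ y, g y ∂ηt = ∫ y, g y ∂η₀ + (N : ℝ)⁻¹ * g x' := by
    rw [hηt, integral_add_smul_dirac hg hN x' hgi]
  have hq0 : ∀ y, 0 ≤ (N : ℝ)⁻¹ * q y := fun y =>
    mul_nonneg (inv_nonneg.2 hn.le) (hδ.le.trans (hqδ y))
  have hcA : ∫ y, q y ∂η₀ ≤ ∫ y, q y ∂η := hA ▸ le_add_of_nonneg_right (hq0 x)
  have hcb : ∫ y, q y ∂η₀ ≤ ∫ y, q y ∂ηt := hb ▸ le_add_of_nonneg_right (hq0 x')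
  rw [hD₂, hD, hGt, second_difference_sq_ratio hn.ne' hA hb hG (hc.trans_le hcA).ne'
    (hc.trans_le hcb).ne', mul_assoc 10, ← mul_pow]
  exact abs_second_difference_le hc hcA hcb
end

section
/- In the setting below, the square of the first-order discrete derivative of the normalized ratio Φ satisfies ( N·(Φ(η̃) − Φ(η)) )² ≤ (2 / η₀(q)²) · ( ν(g)² + Φ(η)²·ν(q)² ). -/
/-! The difference quotient linearises exactly: since `η̃ = η + N⁻¹ • (δ_{x'} - δ_x)`,
`N * (Φ(η̃) - Φ(η)) = (ν(g) - Φ(η) * ν(q)) / η̃(q)`. As `q > 0`, the denominator satisfies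
`η̃(q) ≥ η₀(q) > 0`, and `(a - b)² ≤ 2 * (a² + b²)` gives the bound. The lemma
`integral_add_dirac` reduces the integrals to real numbers, and `ratio_sq_bound` is the resulting
inequality. -/

open MeasureTheory
open scoped ENNReal

/-- Measurability of `f` replaces measurability of singletons in evaluating the Dirac integral. -/
lemma integral_add_dirac {E : Type*} [MeasurableSpace E] {f : E → ℝ} (hf : Measurable f)
    {B : ℝ} (hB : ∀ y, |f y| ≤ B) {N : ℕ} (hN : 1 ≤ N) (x : E)
    (μ : Measure E) [IsFiniteMeasure μ] :
    ∫ y, f y ∂(μ + (N : ℝ≥0∞)⁻¹ • Measure.dirac x) = (∫ y, f y ∂μ) + (N : ℝ)⁻¹ * f x := by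
  have hint : ∀ (ρ : Measure E) [IsFiniteMeasure ρ], Integrable f ρ := fun ρ _ =>
    Integrable.of_bound hf.aestronglyMeasurable B (Filter.Eventually.of_forall hB)
  have hN0 : (N : ℝ≥0∞)⁻¹ ≠ ∞ := by
    simp only [ne_eq, ENNReal.inv_eq_top, Nat.cast_eq_zero]
    omega
  rw [integral_add_measure (hint μ) ((hint (Measure.dirac x)).smul_measure hN0),
    integral_smul_measure, integral_dirac' f x hf.stronglyMeasurable]
  simp

/-- Here `A`, `Q` stand for `η₀(g)`, `η₀(q)`, and `a`, `a'`, `b`, `b'` for the values of `g` and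
`q` at the two points. -/
lemma ratio_sq_bound {A Q a a' b b' n : ℝ} (hQ : 0 < Q) (hb : 0 < b) (hb' : 0 < b')
    (hn : 0 < n) :
    (n * ((A + n⁻¹ * a') / (Q + n⁻¹ * b') - (A + n⁻¹ * a) / (Q + n⁻¹ * b))) ^ 2 ≤
      (2 / Q ^ 2) *
        ((a' - a) ^ 2 + ((A + n⁻¹ * a) / (Q + n⁻¹ * b)) ^ 2 * (b' - b) ^ 2) := by
  have hD : 0 < Q + n⁻¹ * b := by positivity
  have hQD' : Q ≤ Q + n⁻¹ * b' := le_add_of_nonneg_right (by positivity)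
  have hD' : 0 < Q + n⁻¹ * b' := hQ.trans_le hQD'
  obtain ⟨r, hr⟩ : ∃ r, r = (A + n⁻¹ * a) / (Q + n⁻¹ * b) := ⟨_, rfl⟩
  have hrD : r * (Q + n⁻¹ * b) = A + n⁻¹ * a := by rw [hr, div_mul_cancel₀ _ hD.ne']
  rw [← hr]
  have key : n * ((A + n⁻¹ * a') / (Q + n⁻¹ * b') - r) =
      ((a' - a) - r * (b' - b)) / (Q + n⁻¹ * b') := by
    rw [eq_div_iff hD'.ne', mul_assoc, sub_mul, div_mul_cancel₀ _ hD'.ne']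
    have hnn : n * n⁻¹ = 1 := mul_inv_cancel₀ hn.ne'
    linear_combination (-n) * hrD + (a' - a - r * (b' - b)) * hnn
  rw [key, div_pow, div_mul_eq_mul_div]
  gcongr
  nlinarith [sq_nonneg ((a' - a) + r * (b' - b))]

/-- Bound from the proof of Lemma 4.6 of the paper (case k = 2): the square of
the first-order discrete derivative of the normalized ratio `Φ(μ) = μ(g)/μ(q)`
satisfies `(N·(Φ(η̃) − Φ(η)))² ≤ (2/η₀(q)²)·(ν(g)² + Φ(η)²·ν(q)²)`. -/
theorem discrete_derivative_normalized_ratio_sq_bound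
    {E : Type*} [MeasurableSpace E]
    (g q : E → ℝ) (hg : Measurable g) (hq : Measurable q)
    (Bg Bq : ℝ) (hgb : ∀ y, |g y| ≤ Bg) (hqb : ∀ y, |q y| ≤ Bq)
    (δ : ℝ) (hδ : 0 < δ) (hqδ : ∀ y, δ ≤ q y)
    (N : ℕ) (hN : 1 ≤ N) (x x' : E)
    (η₀ : Measure E) [IsFiniteMeasure η₀] (hη₀ : η₀ ≠ 0)
    (η ηt : Measure E)
    (hη : η = η₀ + (N : ℝ≥0∞)⁻¹ • Measure.dirac x)
    (hηt : ηt = η₀ + (N : ℝ≥0∞)⁻¹ • Measure.dirac x') :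
    ((N : ℝ) * ((∫ y, g y ∂ηt) / (∫ y, q y ∂ηt) -
        (∫ y, g y ∂η) / (∫ y, q y ∂η))) ^ 2 ≤
      (2 / (∫ y, q y ∂η₀) ^ 2) *
        ((g x' - g x) ^ 2 +
          ((∫ y, g y ∂η) / (∫ y, q y ∂η)) ^ 2 * (q x' - q x) ^ 2) := by
  have hqpos : ∀ y, 0 < q y := fun y => hδ.trans_le (hqδ y)
  have hQ : 0 < ∫ y, q y ∂η₀ := by
    have hint : Integrable q η₀ :=
      Integrable.of_bound hq.aestronglyMeasurable Bq (Filter.Eventually.of_forall hqb)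
    rw [integral_pos_iff_support_of_nonneg (fun y => (hqpos y).le) hint]
    have hsupp : Function.support q = Set.univ :=
      Set.eq_univ_of_forall fun y => (hqpos y).ne'
    rw [hsupp]
    exact Measure.measure_univ_pos.mpr hη₀
  have hN' : (0 : ℝ) < N := by exact_mod_cast hN
  subst hη hηt
  simp only [integral_add_dirac hg hgb hN, integral_add_dirac hq hqb hN]
  exact ratio_sq_bound hQ (hqpos x) (hqpos x') hN'
end
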